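/- Let M be an n×n integer matrix that is equivalent (via unimodular matrices) to the diagonal matrix with diagonal entries φ₀, …, φ_{n−1}. Then for every abelian group A, the kernel of the induced homomorphism f_M : A^n → A^n is isomorphic as an abelian group to the direct product ∏_{j=0}^{n−1} A(φ_j). -/

import Mathlib

/-- The group homomorphism `f_M : A^n → A^n` induced by an integer matrix `M`,
given by `f_M(x)_j = ∑ i, M i j • x i`. -/
def matHom {ρ κ : ℕ} (A : Type*) [AddCommGroup A] (M : Matrix (Fin ρ) (Fin κ) ℤ) :
    (Fin ρ → A) →+ (Fin κ → A) where
  toFun x := fun j => ∑ i, M i j • x i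
  map_zero' := by funext j; simp
  map_add' x y := by funext j; simp [smul_add, Finset.sum_add_distrib]

/-- For an abelian group `A` and an integer `φ`, the subgroup
`A(φ) = {a ∈ A | φ • a = 0}` of elements annihilated by `φ`. -/
def annSubgroup (A : Type*) [AddCommGroup A] (φ : ℤ) : AddSubgroup A where
  carrier := {a | φ • a = 0}
  zero_mem' := smul_zero φ
  add_mem' := by
    intro a b ha hb
    simp only [Set.mem_setOf_eq] at *
    rw [smul_add, ha, hb, add_zero]
  neg_mem' := by
    intro a ha
    simp only [Set.mem_setOf_eq] at *
    rw [smul_neg, ha, neg_zero]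

/-!
A product `U * M * V` induces `f_V ∘ f_M ∘ f_U`, and `f_U`, `f_V` are automorphisms when `U`, `V`
are unimodular. So `f_U⁻¹` carries `ker f_M` onto `ker f_{U M V}`, and for a diagonal matrix the
condition of lying in the kernel decouples into one annihilation condition per coordinate.
-/

/-- The product of subgroups, seen as a subgroup of the product of the ambient groups, is the
product of the subgroups seen as groups in their own right. -/
def addSubgroupPiUnivEquiv {ι : Type*} {G : ι → Type*} [∀ i, AddGroup (G i)]
    (H : ∀ i, AddSubgroup (G i)) : AddSubgroup.pi Set.univ H ≃+ (∀ i, H i) where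
  toFun x i := ⟨x.1 i, x.2 i (Set.mem_univ i)⟩
  invFun y := ⟨fun i => y i, fun i _ => (y i).2⟩
  map_add' _ _ := rfl

section MatHom

variable {ρ κ τ : ℕ} (A : Type*) [AddCommGroup A]

theorem matHom_apply (M : Matrix (Fin ρ) (Fin κ) ℤ) (x : Fin ρ → A) (j : Fin κ) :
    matHom A M x j = ∑ i, M i j • x i :=
  rfl

theorem matHom_diagonal_apply (φ : Fin ρ → ℤ) (x : Fin ρ → A) (j : Fin ρ) :
    matHom A (Matrix.diagonal φ) x j = φ j • x j := by
  simp [matHom_apply, Matrix.diagonal_apply, ite_smul]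

theorem matHom_one : matHom A (1 : Matrix (Fin ρ) (Fin ρ) ℤ) = AddMonoidHom.id (Fin ρ → A) := by
  refine AddMonoidHom.ext fun x => funext fun j => ?_
  rw [← Matrix.diagonal_one, matHom_diagonal_apply, one_smul, AddMonoidHom.id_apply]

-- The order reverses because `f_M` multiplies row vectors by `M` on the right.
theorem matHom_mul (M : Matrix (Fin ρ) (Fin κ) ℤ) (N : Matrix (Fin κ) (Fin τ) ℤ) :
    matHom A (M * N) = (matHom A N).comp (matHom A M) := by
  refine AddMonoidHom.ext fun x => funext fun j => ?_
  calc ∑ i, (M * N) i j • x i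
    _ = ∑ i, ∑ k, N k j • M i k • x i := by
      simp only [Matrix.mul_apply, Finset.sum_smul, smul_smul, mul_comm]
    _ = ∑ k, N k j • ∑ i, M i k • x i := by
      simp only [Finset.smul_sum]
      exact Finset.sum_comm

/-- The automorphism of `A^ρ` induced by a unimodular matrix, encoded as a unit of the ring of
integer matrices; its inverse is induced by the inverse matrix. -/
def matHomAddEquiv (U : (Matrix (Fin ρ) (Fin ρ) ℤ)ˣ) : (Fin ρ → A) ≃+ (Fin ρ → A) :=
  (matHom A U.val).toAddEquiv (matHom A U.inv)
    (by rw [← matHom_mul, U.val_inv, matHom_one])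
    (by rw [← matHom_mul, U.inv_val, matHom_one])

theorem coe_matHomAddEquiv (U : (Matrix (Fin ρ) (Fin ρ) ℤ)ˣ) :
    (matHomAddEquiv A U : (Fin ρ → A) →+ (Fin ρ → A)) = matHom A U.val :=
  rfl

theorem ker_matHom_units_mul_mul_units (U : (Matrix (Fin ρ) (Fin ρ) ℤ)ˣ)
    (M : Matrix (Fin ρ) (Fin κ) ℤ) (V : (Matrix (Fin κ) (Fin κ) ℤ)ˣ) :
    (matHom A (U.val * M * V.val)).ker =
      (matHom A M).ker.map ((matHomAddEquiv A U).symm : (Fin ρ → A) →+ (Fin ρ → A)) := by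
  rw [matHom_mul, ← coe_matHomAddEquiv A V, AddMonoidHom.ker_addEquiv_comp,
    matHom_mul, ← coe_matHomAddEquiv A U, AddMonoidHom.ker_comp_addEquiv]

theorem mem_annSubgroup {φ : ℤ} {a : A} : a ∈ annSubgroup A φ ↔ φ • a = 0 :=
  Iff.rfl

theorem ker_matHom_diagonal (φ : Fin ρ → ℤ) :
    (matHom A (Matrix.diagonal φ)).ker =
      AddSubgroup.pi Set.univ fun j => annSubgroup A (φ j) := by
  ext x
  simp only [AddMonoidHom.mem_ker, funext_iff, matHom_diagonal_apply, Pi.zero_apply,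
    AddSubgroup.mem_pi, Set.mem_univ, true_imp_iff, mem_annSubgroup]

end MatHom

/-- If an n×n integer matrix `M` is equivalent via unimodular
matrices to the diagonal matrix with diagonal entries `φ 0, …, φ (n-1)`, then
for every abelian group `A` the kernel of `f_M : A^n → A^n` is isomorphic to
`∏ j, A(φ j)`. -/
theorem ker_iso_prod_ann_of_equiv_diagonal (n : ℕ)
    (M : Matrix (Fin n) (Fin n) ℤ) (φ : Fin n → ℤ)
    (hequiv : ∃ (U₁ U₂ : Matrix (Fin n) (Fin n) ℤ),
      IsUnit U₁.det ∧ IsUnit U₂.det ∧ U₁ * M * U₂ = Matrix.diagonal φ)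
    (A : Type*) [AddCommGroup A] :
    Nonempty ((matHom A M).ker ≃+ (∀ j : Fin n, annSubgroup A (φ j))) := by
  obtain ⟨U₁, U₂, hU₁, hU₂, h⟩ := hequiv
  obtain ⟨U, rfl⟩ := (Matrix.isUnit_iff_isUnit_det U₁).2 hU₁
  obtain ⟨V, rfl⟩ := (Matrix.isUnit_iff_isUnit_det U₂).2 hU₂
  have hker : (matHom A M).ker.map ((matHomAddEquiv A U).symm : (Fin n → A) →+ (Fin n → A)) =
      AddSubgroup.pi Set.univ fun j => annSubgroup A (φ j) := by
    rw [← ker_matHom_units_mul_mul_units A U M V, h, ker_matHom_diagonal]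
  exact ⟨((matHomAddEquiv A U).symm.addSubgroupMap (matHom A M).ker).trans
    ((AddEquiv.addSubgroupCongr hker).trans (addSubgroupPiUnivEquiv _))⟩
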